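/- There exists a finite alphabet Σ and a history-deterministic Büchi automaton A over Σ such that every deterministic Büchi automaton that is language-equivalent to A (i.e., recognises the same set of infinite words) has strictly more states than A. -/

import Mathlib

/-- A (nondeterministic) Büchi/coBüchi automaton: an initial state, a set of
transitions, and a subset of *significant* transitions. -/
structure BuchiAutomaton (σ : Type) (Q : Type) where
  init : Q
  trans : Set (Q × σ × Q)
  sig : Set (Q × σ × Q)
  sig_sub : sig ⊆ trans

namespace BuchiAutomaton

variable {σ Q : Type}

/-- `ρ` is a run of `A` on the infinite word `w`, starting at the state `p`. -/
def IsRunFrom (A : BuchiAutomaton σ Q) (p : Q) (w : ℕ → σ) (ρ : ℕ → Q) : Prop :=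
  ρ 0 = p ∧ ∀ i, (ρ i, w i, ρ (i + 1)) ∈ A.trans

/-- Büchi acceptance: the run contains infinitely many significant transitions. -/
def BuchiAcc (A : BuchiAutomaton σ Q) (w : ℕ → σ) (ρ : ℕ → Q) : Prop :=
  ∀ N, ∃ i, N ≤ i ∧ (ρ i, w i, ρ (i + 1)) ∈ A.sig

/-- coBüchi acceptance: the run contains finitely many significant transitions. -/
def CoBuchiAcc (A : BuchiAutomaton σ Q) (w : ℕ → σ) (ρ : ℕ → Q) : Prop :=
  ∃ N, ∀ i, N ≤ i → (ρ i, w i, ρ (i + 1)) ∉ A.sig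

/-- The language of `A` (as a Büchi automaton), with initial state `p`. -/
def LangFrom (A : BuchiAutomaton σ Q) (p : Q) : Set (ℕ → σ) :=
  {w | ∃ ρ, A.IsRunFrom p w ρ ∧ A.BuchiAcc w ρ}

/-- The language of `A`, read as a Büchi automaton. -/
def Lang (A : BuchiAutomaton σ Q) : Set (ℕ → σ) :=
  A.LangFrom A.init

/-- The language of `A`, read as a coBüchi automaton. -/
def CoLang (A : BuchiAutomaton σ Q) : Set (ℕ → σ) :=
  {w | ∃ ρ, A.IsRunFrom A.init w ρ ∧ A.CoBuchiAcc w ρ}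

/-- `A` is deterministic: at most one outgoing transition per state and letter. -/
def Deterministic (A : BuchiAutomaton σ Q) : Prop :=
  ∀ p a q q', (p, a, q) ∈ A.trans → (p, a, q') ∈ A.trans → q = q'

/-- `FinRun A l p`: `l` is a finite run of `A` from the initial state, ending in
the state `p` (represented as the chronological list of its transitions). -/
inductive FinRun (A : BuchiAutomaton σ Q) : List (Q × σ × Q) → Q → Prop
  | nil : FinRun A [] A.init
  | snoc {l : List (Q × σ × Q)} {p : Q} {a : σ} {q : Q} :
      FinRun A l p → (p, a, q) ∈ A.trans → FinRun A (l ++ [(p, a, q)]) q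

/-- A resolver for `A`: a function from finite runs and letters to transitions,
such that on every finite run from the initial state ending in a state `p` and
every letter `a`, it outputs a transition on `a` with source `p`. -/
structure Resolver (A : BuchiAutomaton σ Q) where
  res : List (Q × σ × Q) → σ → Q × σ × Q
  res_valid : ∀ l p a, A.FinRun l p →
    (res l a).1 = p ∧ (res l a).2.1 = a ∧ res l a ∈ A.trans

/-- The history (finite run) built by a resolver after reading `n` letters of `w`. -/
def Resolver.hist {A : BuchiAutomaton σ Q} (r : Resolver A) (w : ℕ → σ) : ℕ → List (Q × σ × Q)
  | 0 => []
  | n + 1 => r.hist w n ++ [r.res (r.hist w n) (w n)]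

/-- The run induced by the resolver on `w` satisfies the Büchi condition. -/
def Resolver.InducedBuchiAcc {A : BuchiAutomaton σ Q} (r : Resolver A) (w : ℕ → σ) : Prop :=
  ∀ N, ∃ n, N ≤ n ∧ r.res (r.hist w n) (w n) ∈ A.sig

/-- The run induced by the resolver on `w` satisfies the coBüchi condition. -/
def Resolver.InducedCoBuchiAcc {A : BuchiAutomaton σ Q} (r : Resolver A) (w : ℕ → σ) : Prop :=
  ∃ N, ∀ n, N ≤ n → r.res (r.hist w n) (w n) ∉ A.sig

/-- `A` is history-deterministic (as a Büchi automaton). -/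
def HistoryDeterministic (A : BuchiAutomaton σ Q) : Prop :=
  ∃ r : Resolver A, ∀ w ∈ A.Lang, r.InducedBuchiAcc w

/-- `A` is history-deterministic (as a coBüchi automaton). -/
def CoHistoryDeterministic (A : BuchiAutomaton σ Q) : Prop :=
  ∃ r : Resolver A, ∀ w ∈ A.CoLang, r.InducedCoBuchiAcc w

end BuchiAutomaton

/-- If from every point of `Y` one can reach, along `R`, an event leading back into `Y`, then some
infinite `R`-sequence starting in `Y` contains infinitely many events. -/
theorem exists_seq_infinitely_many_events {α : Type} {R Ev : α → α → Prop} {Y : Set α}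
    (hR : ∀ x y, Ev x y → R x y)
    (hY : ∀ x ∈ Y, ∃ y z, Relation.ReflTransGen R x y ∧ Ev y z ∧ z ∈ Y) {x₀ : α} (hx₀ : x₀ ∈ Y) :
    ∃ f : ℕ → α, f 0 = x₀ ∧ (∀ n, R (f n) (f (n + 1))) ∧
      ∀ N, ∃ n, N ≤ n ∧ Ev (f n) (f (n + 1)) := by
  let D : ℕ → α → Prop := fun n =>
    Nat.rec (fun x => ∃ z ∈ Y, Ev x z) (fun _ P x => ∃ y, R x y ∧ P y) n
  have hD : ∀ x ∈ Y, ∃ n, D n x := by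
    intro x hx
    obtain ⟨y, z, hxy, hyz, hz⟩ := hY x hx
    clear hx
    induction hxy using Relation.ReflTransGen.head_induction_on with
    | refl => exact ⟨0, z, hz, hyz⟩
    | head h _ ih =>
      obtain ⟨n, hn⟩ := ih
      exact ⟨n + 1, _, h, hn⟩
  have hnext : ∀ p : {p : ℕ × α // D p.1 p.2}, ∃ p' : {p : ℕ × α // D p.1 p.2},
      R p.1.2 p'.1.2 ∧ (p.1.1 = 0 → Ev p.1.2 p'.1.2) ∧ (p.1.1 ≠ 0 → p'.1.1 + 1 = p.1.1) := by
    rintro ⟨⟨n, x⟩, h⟩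
    cases n with
    | zero =>
      obtain ⟨z, hz, hxz⟩ := h
      obtain ⟨n, hn⟩ := hD z hz
      exact ⟨⟨(n, z), hn⟩, hR _ _ hxz, fun _ => hxz, fun h => absurd rfl h⟩
    | succ n =>
      obtain ⟨y, hxy, hy⟩ := h
      exact ⟨⟨(n, y), hy⟩, hxy, fun h => absurd h (Nat.succ_ne_zero n), fun _ => rfl⟩
  choose next hnext using hnext
  obtain ⟨n₀, hn₀⟩ := hD x₀ hx₀
  let g : ℕ → {p : ℕ × α // D p.1 p.2} := fun n => next^[n] ⟨(n₀, x₀), hn₀⟩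
  have hg : ∀ n, g (n + 1) = next (g n) := fun n => Function.iterate_succ_apply' _ _ _
  refine ⟨fun n => (g n).1.2, rfl, fun n => ?_, fun N => ?_⟩
  · simp only [hg]
    exact (hnext _).1
  · obtain ⟨m, hm⟩ : ∃ m, (g N).1.1 = m := ⟨_, rfl⟩
    induction m generalizing N with
    | zero =>
      refine ⟨N, le_rfl, ?_⟩
      simp only [hg]
      exact (hnext _).2.1 hm
    | succ m ih =>
      obtain ⟨n, hn, hev⟩ := ih (N + 1) (by
        have := (hnext (g N)).2.2 (by omega)
        rw [hg]
        omega)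
      exact ⟨n, by omega, hev⟩

/-- A finite family of labelled edges: edge `j` joins `en j true` and `en j false`; the dart with
source `en j t` carries the label `lab j t`, and every label names a set of vertices. -/
structure EdgeDesign (J V L : Type) where
  en : J → Bool → V
  lab : J → Bool → L
  mem : L → V → Prop
  en_mem : ∀ j t t', mem (lab j t') (en j t)
  en_ne : ∀ j t, en j t ≠ en j (!t)
  mem_both : ∀ j v, mem (lab j true) v → mem (lab j false) v → v = en j true ∨ v = en j false
  mem_star : ∀ j t j' t' v, en j t = en j' t' → (j, t) ≠ (j', t') →
    mem (lab j t) v → mem (lab j' t') v → v = en j t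
  not_mem_opposite : ∀ j t j' t', en j t = en j' t' → j ≠ j' → ¬ mem (lab j (!t)) (en j' (!t'))
  simple : ∀ j j', (∀ t, en j' t = en j true ∨ en j' t = en j false) → j' = j

namespace EdgeDesign

/-- Tokens: `p j t` lives in class `some j`, and `r v` lives in class `none`. -/
inductive Tok (J V : Type) : Type
  | p : J → Bool → Tok J V
  | r : V → Tok J V
  deriving Fintype

/-- The alphabet: swap, test, collapse, separate, and kill. -/
inductive Letter (J V : Type) : Type
  | s : J → Letter J V
  | tau : J → Bool → Letter J V
  | c : J → Letter J V
  | sep : V → J → Letter J V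
  | k : J → Bool → Letter J V
  deriving Fintype

variable {J V L : Type}

/-- The class at which a letter is legal. -/
def src : Letter J V → Option J
  | .s j => some j
  | .tau j _ => some j
  | .c j => some j
  | .sep _ _ => none
  | .k _ _ => none

/-- The class to which a letter leads. -/
def tgt : Letter J V → Option J
  | .s j => some j
  | .tau j _ => some j
  | .c _ => none
  | .sep _ j => some j
  | .k j _ => some j

/-- The class of a token. -/
def cls : Tok J V → Option J
  | .p j _ => some j
  | .r _ => none

open Classical in
/-- The action of letters on tokens; `none` means that the token dies. -/
noncomputable def step (D : EdgeDesign J V L) : Letter J V → Tok J V → Option (Tok J V)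
  | .s j, .p j' t => if j' = j then some (.p j (!t)) else none
  | .tau j t, .p j' t' => if j' = j ∧ t' = !t then some (.p j t) else none
  | .c j, .p j' t => if j' = j then some (.r (D.en j t)) else none
  | .sep v j, .r u => some (.p j (decide (u = v)))
  | .k j t, .r u =>
    if u = D.en j t then none else some (.p j (decide (D.mem (D.lab j t) u)))
  | _, _ => none

variable (D : EdgeDesign J V L)

theorem cls_of_step {a : Letter J V} {x y : Tok J V} (h : D.step a x = some y) :
    cls x = src a ∧ cls y = tgt a := by
  cases a <;> cases x <;> simp only [step, reduceCtorEq] at h <;> (try split_ifs at h) <;>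
    simp_all [cls, src, tgt] <;> (subst h; rfl)

/-- Some token survives forever along `w`. -/
def Immortal (w : ℕ → Letter J V) : Prop :=
  ∃ (i : ℕ) (f : ℕ → Tok J V), ∀ n, D.step (w (i + n)) (f n) = some (f (n + 1))

/-- `w` is legal from class `C` and some token survives forever: the words to be rejected. -/
def Bad (C : Option J) (w : ℕ → Letter J V) : Prop :=
  src (w 0) = C ∧ (∀ n, src (w (n + 1)) = tgt (w n)) ∧ D.Immortal w

/-- The typed part of a deterministic automaton recognising the complement of `Bad`. -/
structure Model (D : EdgeDesign J V L) (Q : Type) where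
  δ : Q → Letter J V → Q
  acc : Q → Letter J V → Prop
  Typ : Option J → Q → Prop
  typ_next : ∀ q a, Typ (src a) q → Typ (tgt a) (δ q a)
  typ_unique : ∀ C C' q, Typ C q → Typ C' q → C = C'
  exists_typ : ∃ j q, Typ (some j) q
  acc_iff : ∀ (q : ℕ → Q) (w : ℕ → Letter J V),
    (∀ n, Typ (src (w n)) (q n) ∧ q (n + 1) = δ (q n) (w n)) →
      ((∀ N, ∃ n, N ≤ n ∧ acc (q n) (w n)) ↔ ¬ D.Immortal w)

namespace Model

variable {D} {Q : Type} (M : D.Model Q)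

/-- One step of the automaton together with a surviving token. -/
def Move (x y : Q × Tok J V) : Prop :=
  ∃ a, M.Typ (src a) x.1 ∧ y.1 = M.δ x.1 a ∧ D.step a x.2 = some y.2

/-- An accepting step of the automaton together with a surviving token. -/
def AccMove (x y : Q × Tok J V) : Prop :=
  ∃ a, M.Typ (src a) x.1 ∧ y.1 = M.δ x.1 a ∧ D.step a x.2 = some y.2 ∧ M.acc x.1 a

/-- Reachability along a token path with at least one accepting step. -/
def AccReach (x y : Q × Tok J V) : Prop :=
  ∃ u v, Relation.ReflTransGen M.Move x u ∧ M.AccMove u v ∧ Relation.ReflTransGen M.Move v y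

theorem AccMove.move {M : D.Model Q} {x y : Q × Tok J V} (h : M.AccMove x y) : M.Move x y := by
  obtain ⟨a, h₁, h₂, h₃, _⟩ := h
  exact ⟨a, h₁, h₂, h₃⟩

theorem not_accReach_self (x : Q × Tok J V) : ¬ M.AccReach x x := by
  rintro ⟨u, v, hxu, huv, hvx⟩
  obtain ⟨f, -, hf, hinf⟩ := exists_seq_infinitely_many_events
    (R := M.Move) (Ev := M.AccMove) (Y := {v})
    (fun _ _ h => AccMove.move h)
    (by rintro _ rfl; exact ⟨u, _, hvx.trans hxu, huv, rfl⟩) (Set.mem_singleton v)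
  have hex : ∀ n, ∃ a, M.Typ (src a) (f n).1 ∧ (f (n + 1)).1 = M.δ (f n).1 a ∧
      D.step a (f n).2 = some (f (n + 1)).2 ∧
      (M.AccMove (f n) (f (n + 1)) → M.acc (f n).1 a) := by
    intro n
    by_cases h : M.AccMove (f n) (f (n + 1))
    · obtain ⟨a, h₁, h₂, h₃, h₄⟩ := h
      exact ⟨a, h₁, h₂, h₃, fun _ => h₄⟩
    · obtain ⟨a, h₁, h₂, h₃⟩ := hf n
      exact ⟨a, h₁, h₂, h₃, fun h' => absurd h' h⟩
  choose w hw using hex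
  refine (M.acc_iff (fun n => (f n).1) w fun n => ⟨(hw n).1, (hw n).2.1⟩).1 ?_ ?_
  · intro N
    obtain ⟨n, hn, h⟩ := hinf N
    exact ⟨n, hn, (hw n).2.2.2 h⟩
  · exact ⟨0, fun n => (f n).2, fun n => by simpa using (hw n).2.2.1⟩

/-- The number of state-token pairs reachable through an accepting step. -/
noncomputable def rk (q : Q) (x : Tok J V) : ℕ := {y | M.AccReach (q, x) y}.ncard

section Rank

variable [Finite J] [Finite V] [Finite Q]

instance finiteTok : Finite (Tok J V) := by
  have := Fintype.ofFinite J
  have := Fintype.ofFinite V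
  infer_instance

theorem rk_step_le {q : Q} {a : Letter J V} {x y : Tok J V} (hq : M.Typ (src a) q)
    (h : D.step a x = some y) : M.rk (M.δ q a) y ≤ M.rk q x := by
  refine Set.ncard_le_ncard ?_ (Set.toFinite _)
  rintro z ⟨u, v, h₁, h₂, h₃⟩
  exact ⟨u, v, Relation.ReflTransGen.head ⟨a, hq, rfl, h⟩ h₁, h₂, h₃⟩

theorem rk_step_lt {q : Q} {a : Letter J V} {x y : Tok J V} (hq : M.Typ (src a) q)
    (h : D.step a x = some y) (hacc : M.acc q a) : M.rk (M.δ q a) y < M.rk q x := by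
  refine Set.ncard_lt_ncard (Set.ssubset_iff_exists.2 ⟨?_, (M.δ q a, y), ?_, ?_⟩) (Set.toFinite _)
  · rintro z ⟨u, v, h₁, h₂, h₃⟩
    exact ⟨u, v, Relation.ReflTransGen.head ⟨a, hq, rfl, h⟩ h₁, h₂, h₃⟩
  · exact ⟨_, _, .refl, ⟨a, hq, rfl, h, hacc⟩, .refl⟩
  · exact M.not_accReach_self _

end Rank

/-- A non-accepting step, together with an overapproximation of the surviving tokens. -/
def Quiet (x y : Q × Set (Tok J V)) : Prop :=
  ∃ a, M.Typ (src a) x.1 ∧ ¬ M.acc x.1 a ∧ y.1 = M.δ x.1 a ∧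
    ∀ t ∈ x.2, ∀ u, D.step a t = some u → u ∈ y.2

/-- A non-accepting step killing all tracked tokens, after which all tokens are tracked. -/
def QuietKill (x y : Q × Set (Tok J V)) : Prop :=
  ∃ a, M.Typ (src a) x.1 ∧ ¬ M.acc x.1 a ∧ y.1 = M.δ x.1 a ∧
    (∀ t ∈ x.2, D.step a t = none) ∧ y.2 = Set.univ

/-- No automaton state set can be traversed forever killing all tokens without accepting. -/
theorem not_forever_quietKill {X : Set Q} (hne : X.Nonempty)
    (hX : ∀ q ∈ X, ∃ y, Relation.ReflTransGen M.Quiet (q, Set.univ) y ∧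
      ∃ q' ∈ X, M.QuietKill y (q', Set.univ)) : False := by
  obtain ⟨q₀, hq₀⟩ := hne
  obtain ⟨f, -, hf, hinf⟩ := exists_seq_infinitely_many_events
    (R := M.Quiet) (Ev := M.QuietKill) (Y := {z | z.1 ∈ X ∧ z.2 = Set.univ})
    (by
      rintro x y ⟨a, h₁, h₂, h₃, -, h₄⟩
      exact ⟨a, h₁, h₂, h₃, fun t _ t' _ => h₄ ▸ Set.mem_univ t'⟩)
    (by
      rintro ⟨q, E⟩ ⟨hq, hE⟩
      obtain ⟨y, hy, q', hq', hk⟩ := hX q hq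
      obtain rfl : E = Set.univ := hE
      exact ⟨y, _, hy, hk, hq', rfl⟩)
    (show (q₀, Set.univ) ∈ _ from ⟨hq₀, rfl⟩)
  have hex : ∀ n, ∃ a, M.Typ (src a) (f n).1 ∧ ¬ M.acc (f n).1 a ∧ (f (n + 1)).1 = M.δ (f n).1 a ∧
      (∀ t ∈ (f n).2, ∀ t', D.step a t = some t' → t' ∈ (f (n + 1)).2) ∧
      (M.QuietKill (f n) (f (n + 1)) → ∀ t ∈ (f n).2, D.step a t = none) := by
    intro n
    by_cases h : M.QuietKill (f n) (f (n + 1))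
    · obtain ⟨a, h₁, h₂, h₃, h₄, h₅⟩ := h
      exact ⟨a, h₁, h₂, h₃, fun t _ t' _ => h₅ ▸ Set.mem_univ t', fun _ => h₄⟩
    · obtain ⟨a, h₁, h₂, h₃, h₄⟩ := hf n
      exact ⟨a, h₁, h₂, h₃, h₄, fun h' => absurd h' h⟩
  choose w hw using hex
  have himm : D.Immortal w := by
    by_contra h
    obtain ⟨n, -, hn⟩ :=
      (M.acc_iff (fun n => (f n).1) w fun n => ⟨(hw n).1, (hw n).2.2.1⟩).2 h 0
    exact (hw n).2.1 hn
  obtain ⟨i, g, hg⟩ := himm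
  obtain ⟨n, hn, hk⟩ := hinf i
  have hmem : ∀ m, g (n - i + 1 + m) ∈ (f (n + 1 + m)).2 := by
    intro m
    induction m with
    | zero =>
      obtain ⟨_, _, _, _, _, h⟩ := hk
      simp [h]
    | succ m ih =>
      refine (hw (n + 1 + m)).2.2.2.1 _ ih _ ?_
      have := hg (n - i + 1 + m)
      rwa [show i + (n - i + 1 + m) = n + 1 + m by omega] at this
  obtain ⟨n', hn', hk'⟩ := hinf (n + 1)
  obtain ⟨m, rfl⟩ := Nat.exists_eq_add_of_le hn'
  have h₁ := (hw (n + 1 + m)).2.2.2.2 hk' _ (hmem m)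
  have h₂ := hg (n - i + 1 + m)
  rw [show i + (n - i + 1 + m) = n + 1 + m by omega, h₁] at h₂
  simp at h₂

section LowerBound

set_option linter.unusedSectionVars false

variable [Finite J] [Finite V] [Finite Q]

theorem step_s (j : J) (t : Bool) : D.step (.s j) (.p j t) = some (.p j (!t)) := by simp [step]

theorem step_c (j : J) (t : Bool) : D.step (.c j) (.p j t) = some (.r (D.en j t)) := by simp [step]

theorem typ_c {j : J} {q : Q} (h : M.Typ (some j) q) : M.Typ none (M.δ q (.c j)) :=
  M.typ_next q (.c j) h

theorem typ_s {j : J} {q : Q} (h : M.Typ (some j) q) : M.Typ (some j) (M.δ q (.s j)) :=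
  M.typ_next q (.s j) h

theorem rk_c_le {j : J} {q : Q} (h : M.Typ (some j) q) (t : Bool) :
    M.rk (M.δ q (.c j)) (.r (D.en j t)) ≤ M.rk q (.p j t) :=
  M.rk_step_le (a := .c j) h (step_c j t)

theorem rk_s_le {j : J} {q : Q} (h : M.Typ (some j) q) (t : Bool) :
    M.rk (M.δ q (.s j)) (.p j (!t)) ≤ M.rk q (.p j t) :=
  M.rk_step_le (a := .s j) h (step_s j t)

/-- The least rank of a token in an edge class. -/
noncomputable def minRk : ℕ := sInf {n | ∃ j t q, M.Typ (some j) q ∧ M.rk q (.p j t) = n}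

theorem minRk_le {j : J} {q : Q} (h : M.Typ (some j) q) (t : Bool) :
    M.minRk ≤ M.rk q (.p j t) :=
  Nat.sInf_le ⟨j, t, q, h, rfl⟩

theorem exists_rk_eq_minRk (j : J) (t : Bool) :
    ∃ q, M.Typ (some j) q ∧ M.rk q (.p j t) = M.minRk := by
  have hne : {n | ∃ j t q, M.Typ (some j) q ∧ M.rk q (.p j t) = n}.Nonempty := by
    obtain ⟨j, q, h⟩ := M.exists_typ
    exact ⟨_, j, true, q, h, rfl⟩
  obtain ⟨j₀, t₀, q, hq, hmin⟩ := Nat.sInf_mem hne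
  have key : ∃ q, M.Typ (some j) q ∧ M.rk q (.p j true) = M.minRk := by
    have hc := M.typ_c hq
    have hsep := M.typ_next _ (.sep (D.en j₀ t₀) j) hc
    refine ⟨_, hsep, le_antisymm ?_ (M.minRk_le hsep true)⟩
    refine (M.rk_step_le (a := .sep (D.en j₀ t₀) j) (x := .r (D.en j₀ t₀)) hc
      (by simp [step])).trans ((M.rk_c_le hq t₀).trans hmin.le)
  cases t with
  | true => exact key
  | false =>
    obtain ⟨q, hq, h⟩ := key
    exact ⟨_, M.typ_s hq, le_antisymm ((M.rk_s_le hq true).trans h.le) (M.minRk_le (M.typ_s hq) _)⟩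

/-- The least possible maximal rank over the two tokens of class `some j`. -/
noncomputable def level (j : J) : ℕ :=
  sInf {n | ∃ q, M.Typ (some j) q ∧ max (M.rk q (.p j true)) (M.rk q (.p j false)) = n}

/-- The states of class `some j` both of whose tokens have rank at most `level j`. -/
def core (j : J) : Set Q := {q | M.Typ (some j) q ∧ ∀ t, M.rk q (.p j t) ≤ M.level j}

theorem core_nonempty (j : J) : (M.core j).Nonempty := by
  have hne : {n | ∃ q, M.Typ (some j) q ∧
      max (M.rk q (.p j true)) (M.rk q (.p j false)) = n}.Nonempty := by
    obtain ⟨q, hq, -⟩ := M.exists_rk_eq_minRk j true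
    exact ⟨_, q, hq, rfl⟩
  obtain ⟨q, hq, h⟩ := Nat.sInf_mem hne
  refine ⟨q, hq, fun t => ?_⟩
  rw [level, ← h]
  cases t
  · exact le_max_right _ _
  · exact le_max_left _ _

theorem exists_level_le {j : J} {q : Q} (h : M.Typ (some j) q) :
    ∃ t, M.level j ≤ M.rk q (.p j t) := by
  have := Nat.sInf_le (s := {n | ∃ q, M.Typ (some j) q ∧
    max (M.rk q (.p j true)) (M.rk q (.p j false)) = n}) ⟨q, h, rfl⟩
  rcases le_max_iff.1 this with h | h
  · exact ⟨true, h⟩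
  · exact ⟨false, h⟩

theorem landing {j : J} {q : Q} {a : Letter J V} (hq : M.Typ (src a) q) (ha : tgt a = some j)
    (h : ∀ t, ∃ x, D.step a x = some (.p j t) ∧ M.rk q x ≤ M.level j) :
    ¬ M.acc q a ∧ M.δ q a ∈ M.core j := by
  have ht : M.Typ (some j) (M.δ q a) := ha ▸ M.typ_next q a hq
  refine ⟨fun hacc => ?_, ht, fun t => ?_⟩
  · obtain ⟨t, hle⟩ := M.exists_level_le ht
    obtain ⟨x, hx, hr⟩ := h t
    exact absurd (M.rk_step_lt hq hx hacc) (by omega)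
  · obtain ⟨x, hx, hr⟩ := h t
    exact (M.rk_step_le hq hx).trans hr

theorem core_s {j : J} {b : Q} (hb : b ∈ M.core j) :
    ¬ M.acc b (.s j) ∧ M.δ b (.s j) ∈ M.core j :=
  M.landing (a := .s j) hb.1 rfl fun t =>
    ⟨.p j (!t), by simpa using step_s j (!t), hb.2 _⟩

/-- Only the token `p j t` of class `some j` has minimal rank in `q`. -/
def Zero (j : J) (q : Q) (t : Bool) : Prop :=
  M.rk q (.p j t) = M.minRk ∧ M.rk q (.p j (!t)) ≠ M.minRk

/-- Both or none of the tokens of class `some j` have minimal rank in `q`. -/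
def Even (j : J) (q : Q) : Prop :=
  M.rk q (.p j true) = M.minRk ↔ M.rk q (.p j false) = M.minRk

theorem even_or_zero (j : J) (q : Q) : M.Even j q ∨ ∃ t, M.Zero j q t := by
  by_cases h₁ : M.rk q (.p j true) = M.minRk <;> by_cases h₂ : M.rk q (.p j false) = M.minRk
  · exact .inl (iff_of_true h₁ h₂)
  · exact .inr ⟨true, h₁, h₂⟩
  · exact .inr ⟨false, h₂, h₁⟩
  · exact .inl (iff_of_false h₁ h₂)

theorem Zero.not_even {M : D.Model Q} {j : J} {q : Q} {t : Bool} (h : M.Zero j q t) :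
    ¬ M.Even j q := by
  intro he
  obtain ⟨h₁, h₂⟩ := h
  cases t
  · exact h₂ (he.2 h₁)
  · exact h₂ (he.1 h₁)

theorem Zero.unique {M : D.Model Q} {j : J} {q : Q} {t t' : Bool} (h : M.Zero j q t)
    (h' : M.rk q (.p j t') = M.minRk) : t' = t := by
  by_contra hne
  obtain rfl : t' = !t := by cases t <;> cases t' <;> simp_all
  exact h.2 h'

theorem exists_zero (j : J) (t : Bool) : ∃ q, M.Typ (some j) q ∧ M.Zero j q t := by
  by_contra! hno
  have hboth : ∀ q, M.Typ (some j) q → M.rk q (.p j t) = M.minRk →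
      M.rk q (.p j (!t)) = M.minRk := by
    intro q hq h
    by_contra h'
    exact hno q hq ⟨h, h'⟩
  have hstep : D.step (.tau j t) (.p j (!t)) = some (.p j t) := by simp [step]
  have hstep' : ∀ x y, D.step (.tau j t) x = some y → y = .p j t := by
    rintro (⟨j', t'⟩ | v) y h
    · simp only [step] at h
      split_ifs at h
      simp_all
    · simp [step] at h
  have hdead : D.step (.tau j t) (.p j t) = none := by simp [step]
  have hnext : ∀ q, M.Typ (some j) q → M.rk q (.p j t) = M.minRk →
      ¬ M.acc q (.tau j t) ∧ M.Typ (some j) (M.δ q (.tau j t)) ∧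
        M.rk (M.δ q (.tau j t)) (.p j t) = M.minRk := by
    intro q hq h
    have ht : M.Typ (some j) (M.δ q (.tau j t)) := M.typ_next q (.tau j t) hq
    have hmin := M.minRk_le ht t
    have h' := hboth q hq h
    refine ⟨fun hacc => ?_, ht, ?_⟩
    · have := M.rk_step_lt (a := .tau j t) hq hstep hacc
      omega
    · have := M.rk_step_le (a := .tau j t) hq hstep
      omega
  refine M.not_forever_quietKill
    (X := {q | M.Typ (some j) q ∧ M.rk q (.p j t) = M.minRk}) (M.exists_rk_eq_minRk j t) ?_
  rintro q ⟨hq, h⟩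
  obtain ⟨h₁, h₂, h₃⟩ := hnext q hq h
  obtain ⟨h₄, h₅, h₆⟩ := hnext _ h₂ h₃
  refine ⟨(M.δ q (.tau j t), {.p j t}), .single ⟨.tau j t, hq, h₁, rfl, ?_⟩,
    M.δ (M.δ q (.tau j t)) (.tau j t), ⟨h₅, h₆⟩, .tau j t, h₂, h₄, rfl, ?_, rfl⟩
  · exact fun x _ y hxy => hstep' x y hxy
  · rintro _ rfl
    exact hdead

/-- The class-`none` state reached from `b` by the collapsing letter of `j`. -/
def drop (j : J) (b : Q) : Q := M.δ b (.c j)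

theorem rk_drop_le {j : J} {b : Q} (hb : b ∈ M.core j) (t : Bool) :
    M.rk (M.drop j b) (.r (D.en j t)) ≤ M.level j :=
  (M.rk_c_le hb.1 t).trans (hb.2 t)

theorem rk_drop_zero {j : J} {b : Q} (hb : b ∈ M.core j) {t : Bool} (h : M.Zero j b t) :
    M.rk (M.drop j b) (.r (D.en j t)) ≤ M.minRk :=
  (M.rk_c_le hb.1 t).trans h.1.le

theorem minRk_lt_level {j : J} {b : Q} (hb : b ∈ M.core j) {t : Bool} (h : M.Zero j b t) :
    M.minRk < M.level j :=
  lt_of_lt_of_le (lt_of_le_of_ne (M.minRk_le hb.1 (!t)) (Ne.symm h.2)) (hb.2 _)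

theorem level_le_of_sep {j : J} {q : Q} (hq : M.Typ none q) {u d : V} (hud : d ≠ u) :
    M.level j ≤ M.rk q (.r u) ∨ M.level j ≤ M.rk q (.r d) := by
  have ht := M.typ_next q (.sep u j) hq
  have h₁ := M.rk_step_le (a := .sep u j) (x := .r u) (y := .p j true) hq (by simp [step])
  have h₂ := M.rk_step_le (a := .sep u j) (x := .r d) (y := .p j false) hq (by simp [step, hud])
  obtain ⟨t, h⟩ := M.exists_level_le (j := j) ht
  cases t
  · exact .inr (h.trans h₂)
  · exact .inl (h.trans h₁)

theorem level_le_rk_drop {j : J} {b : Q} (hb : b ∈ M.core j) {t : Bool} (h : M.Zero j b t) {d : V}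
    (hd : d ≠ D.en j t) : M.level j ≤ M.rk (M.drop j b) (.r d) := by
  refine (M.level_le_of_sep (M.typ_c hb.1) hd).resolve_left fun hle => ?_
  exact absurd (hle.trans (M.rk_drop_zero hb h)) (M.minRk_lt_level hb h).not_ge

theorem not_acc_c {j : J} {b : Q} (hb : b ∈ M.core j) : ¬ M.acc b (.c j) := by
  intro hacc
  have hlt : ∀ t, M.rk (M.drop j b) (.r (D.en j t)) < M.level j := fun t =>
    (M.rk_step_lt (a := .c j) hb.1 (step_c j t) hacc).trans_le (hb.2 t)
  rcases M.level_le_of_sep (j := j) (M.typ_c hb.1) (D.en_ne j true) with h | h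
  · exact absurd h (hlt false).not_ge
  · exact absurd h (hlt true).not_ge

/-- From `b`, killing the token `p j t` via class `none` is quiet and stays in the core. -/
def Avail (j : J) (b : Q) (t : Bool) : Prop :=
  ¬ M.acc (M.drop j b) (.k j t) ∧ M.δ (M.drop j b) (.k j t) ∈ M.core j

theorem avail_of_decoy {j : J} {b : Q} (hb : b ∈ M.core j) {t : Bool} {d : V}
    (hd : ¬ D.mem (D.lab j t) d) (hr : M.rk (M.drop j b) (.r d) ≤ M.level j) : M.Avail j b t := by
  refine M.landing (a := .k j t) (M.typ_c hb.1) rfl fun u => ?_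
  cases u with
  | true =>
    refine ⟨.r (D.en j (!t)), ?_, M.rk_drop_le hb _⟩
    simp [step, D.en_mem j (!t) t, (D.en_ne j t).symm]
  | false =>
    have : d ≠ D.en j t := fun h => hd (h ▸ D.en_mem j t t)
    exact ⟨.r d, by simp [step, hd, this], hr⟩

/-- A core state whose drop is shared with a core state of another edge that yields decoys. -/
def Shared (j : J) (b : Q) : Prop :=
  ∃ j' b', j' ≠ j ∧ b' ∈ M.core j' ∧ M.drop j b = M.drop j' b' ∧
    ((M.Even j b ∧ M.level j' ≤ M.level j) ∨ ∃ t t', M.Zero j b t ∧ M.Zero j' b' t')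

theorem Shared.avail_of_zero {M : D.Model Q} {j : J} {b : Q} (hb : b ∈ M.core j)
    (h : M.Shared j b) {t : Bool} (hz : M.Zero j b t) (u : Bool) : M.Avail j b u := by
  obtain ⟨j', b', hj, hb', hdrop, ⟨he, -⟩ | ⟨t₁, t', hz₁, hz'⟩⟩ := h
  · exact absurd he hz.not_even
  obtain rfl := hz.unique hz₁.1
  have hen : D.en j' t' = D.en j t₁ := by
    by_contra hne
    have h₁ := M.level_le_rk_drop hb hz hne
    have h₂ := M.rk_drop_zero hb' hz'
    have h₃ := M.minRk_lt_level hb hz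
    rw [hdrop] at h₁
    omega
  have hlevel : M.level j' ≤ M.level j := by
    have h₁ := M.level_le_rk_drop hb' hz' (d := D.en j (!t₁))
      (fun h => D.en_ne j t₁ (hen ▸ h.symm))
    rw [← hdrop] at h₁
    exact h₁.trans (M.rk_drop_le hb _)
  refine M.avail_of_decoy hb (d := D.en j' (!t')) ?_
    ((hdrop ▸ M.rk_drop_le hb' (!t')).trans hlevel)
  rcases Bool.eq_or_eq_not u t₁ with rfl | rfl
  · intro hm
    have := D.mem_star j u j' t' _ hen.symm (fun h => hj (congrArg Prod.fst h).symm) hm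
      (D.en_mem j' (!t') t')
    exact D.en_ne j' t' (hen.trans this.symm)
  · exact D.not_mem_opposite j t₁ j' t' hen.symm (Ne.symm hj)

theorem Shared.exists_avail {M : D.Model Q} {j : J} {b : Q} (hb : b ∈ M.core j)
    (h : M.Shared j b) : ∃ t, M.Avail j b t := by
  rcases M.even_or_zero j b with he | ⟨t, hz⟩
  · obtain ⟨j', b', hj, hb', hdrop, ⟨-, hlevel⟩ | ⟨t, t', hz, -⟩⟩ := h
    · by_contra! hno
      refine hj (D.simple j j' fun u => ?_)
      have hm : ∀ t, D.mem (D.lab j t) (D.en j' u) := by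
        intro t
        by_contra hm
        exact hno t (M.avail_of_decoy hb hm ((hdrop ▸ M.rk_drop_le hb' u).trans hlevel))
      exact D.mem_both j _ (hm true) (hm false)
    · exact absurd he hz.not_even
  · exact ⟨true, h.avail_of_zero hb hz true⟩

/-- One round of killing: after it only `p j true` can be alive. -/
theorem quiet_round {j : J} {b : Q} (hb : b ∈ M.core j) {t : Bool} (h : M.Avail j b t) :
    Relation.ReflTransGen M.Quiet (b, Set.univ) (M.δ (M.drop j b) (.k j t), {.p j true}) := by
  refine .tail (.single (b := (M.drop j b, {x | ∃ u, x = .r (D.en j u)})) ?_) ?_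
  · refine ⟨.c j, hb.1, M.not_acc_c hb, rfl, ?_⟩
    rintro (⟨j', u⟩ | v) - y hy
    · simp only [step] at hy
      split_ifs at hy
      exact ⟨u, (Option.some.inj hy).symm⟩
    · simp [step] at hy
  · refine ⟨.k j t, M.typ_c hb.1, h.1, rfl, ?_⟩
    rintro _ ⟨u, rfl⟩ y hy
    simp only [step] at hy
    split_ifs at hy
    simp only [D.en_mem j u t, decide_true, Option.some.injEq] at hy
    exact hy.symm

/-- A round of killing that starts with the single token `p j t`. -/
theorem quiet_kill {j : J} {b : Q} (hb : b ∈ M.core j) {t : Bool} (h : M.Avail j b t) :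
    ∃ y, Relation.ReflTransGen M.Quiet (b, {.p j t}) y ∧
      M.QuietKill y (M.δ (M.drop j b) (.k j t), Set.univ) := by
  refine ⟨(M.drop j b, {.r (D.en j t)}), .single ⟨.c j, hb.1, M.not_acc_c hb, rfl, ?_⟩,
    .k j t, M.typ_c hb.1, h.1, rfl, ?_, rfl⟩
  · rintro _ rfl y hy
    rw [step_c] at hy
    exact (Option.some.inj hy).symm
  · rintro _ rfl
    simp [step]

theorem adversary {j : J} (hav : ∀ b ∈ M.core j, ∀ t,
    M.Avail j b t ∨ M.Avail j (M.δ b (.s j)) (!t)) : False := by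
  have hround : ∀ b ∈ M.core j, ∃ b' ∈ M.core j,
      Relation.ReflTransGen M.Quiet (b, Set.univ) (b', {.p j true}) := by
    intro b hb
    rcases hav b hb true with h | h
    · exact ⟨_, h.2, M.quiet_round hb h⟩
    · refine ⟨_, h.2, .head ?_ (M.quiet_round (M.core_s hb).2 h)⟩
      exact ⟨.s j, hb.1, (M.core_s hb).1, rfl, fun _ _ _ _ => Set.mem_univ _⟩
  refine M.not_forever_quietKill (M.core_nonempty j) fun b hb => ?_
  obtain ⟨b', hb', hpath⟩ := hround b hb
  rcases hav b' hb' true with h | h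
  · obtain ⟨y, hy, hk⟩ := M.quiet_kill hb' h
    exact ⟨y, hpath.trans hy, _, h.2, hk⟩
  · obtain ⟨y, hy, hk⟩ := M.quiet_kill (M.core_s hb').2 h
    refine ⟨y, hpath.trans (.head ?_ hy), _, h.2, hk⟩
    refine ⟨.s j, hb'.1, (M.core_s hb').1, rfl, ?_⟩
    rintro _ rfl y hy
    rw [step_s] at hy
    exact (Option.some.inj hy).symm

/-- The states of class `some j`. -/
def states (j : J) : Set Q := {q | M.Typ (some j) q}

/-- The drops of those core states of `j` that are not shared. -/
def drops (j : J) : Set Q := {q | ∃ b ∈ M.core j, ¬ M.Shared j b ∧ M.drop j b = q}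

theorem disjoint_states_drops (j j' : J) : Disjoint (M.states j) (M.drops j') := by
  rw [Set.disjoint_left]
  rintro _ hq ⟨b, hb, -, rfl⟩
  exact absurd (M.typ_unique _ _ _ hq (M.typ_c hb.1)) (by simp)

theorem disjoint_states {j j' : J} (h : j ≠ j') : Disjoint (M.states j) (M.states j') := by
  rw [Set.disjoint_left]
  exact fun q hq hq' => h (Option.some.inj (M.typ_unique _ _ _ hq hq'))

theorem shared_of_even_of_zero {j j' : J} (hj : j' ≠ j) {b b' : Q} (hb : b ∈ M.core j)
    (hb' : b' ∈ M.core j') (hdrop : M.drop j b = M.drop j' b') (he : M.Even j b) {t' : Bool}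
    (hz : M.Zero j' b' t') : M.Shared j b := by
  refine ⟨j', b', hj, hb', hdrop, .inl ⟨he, ?_⟩⟩
  obtain ⟨u, hu⟩ : ∃ u, D.en j u ≠ D.en j' t' := by
    by_contra! h
    exact D.en_ne j true ((h true).trans (h (!true)).symm)
  have := M.level_le_rk_drop hb' hz hu
  rw [← hdrop] at this
  exact this.trans (M.rk_drop_le hb u)

theorem disjoint_drops {j j' : J} (h : j ≠ j') : Disjoint (M.drops j) (M.drops j') := by
  rw [Set.disjoint_left]
  rintro _ ⟨b, hb, hs, rfl⟩ ⟨b', hb', hs', hdrop⟩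
  rcases M.even_or_zero j b with he | ⟨t, hz⟩ <;> rcases M.even_or_zero j' b' with he' | ⟨t', hz'⟩
  · rcases le_total (M.level j') (M.level j) with hl | hl
    · exact hs ⟨j', b', h.symm, hb', hdrop.symm, .inl ⟨he, hl⟩⟩
    · exact hs' ⟨j, b, h, hb, hdrop, .inl ⟨he', hl⟩⟩
  · exact hs (M.shared_of_even_of_zero h.symm hb hb' hdrop.symm he hz')
  · exact hs' (M.shared_of_even_of_zero h hb' hb hdrop he' hz)
  · exact hs ⟨j', b', h.symm, hb', hdrop.symm, .inr ⟨t, t', hz, hz'⟩⟩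

theorem drop_injective_of_zero {j : J} {b b' : Q} (hb : b ∈ M.core j) (hb' : b' ∈ M.core j)
    {t : Bool} (hz : M.Zero j b t) (hz' : M.Zero j b' (!t)) : M.drop j b ≠ M.drop j b' := by
  intro h
  have h₁ := M.level_le_rk_drop hb hz (D.en_ne j t).symm
  have h₂ := M.rk_drop_zero hb' hz'
  have h₃ := M.minRk_lt_level hb hz
  rw [h] at h₁
  omega

theorem exists_two_zero (j : J) : ∃ q₁ ∈ M.states j, ∃ q₂ ∈ M.states j,
    M.Zero j q₁ true ∧ M.Zero j q₂ false ∧ q₁ ≠ q₂ := by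
  obtain ⟨q₁, h₁, z₁⟩ := M.exists_zero j true
  obtain ⟨q₂, h₂, z₂⟩ := M.exists_zero j false
  refine ⟨q₁, h₁, q₂, h₂, z₁, z₂, ?_⟩
  rintro rfl
  exact absurd (z₁.unique z₂.1) (by simp)

theorem two_le_ncard_states (j : J) : 2 ≤ (M.states j).ncard := by
  obtain ⟨q₁, h₁, q₂, h₂, -, -, hne⟩ := M.exists_two_zero j
  exact (Set.one_lt_ncard (Set.toFinite _)).2 ⟨q₁, h₁, q₂, h₂, hne⟩

/-- With at most three states, some core state is not shared. -/
theorem drops_nonempty {j : J} (hcard : (M.states j).ncard ≤ 3) : (M.drops j).Nonempty := by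
  by_contra hempty
  have hshared : ∀ b ∈ M.core j, M.Shared j b := by
    intro b hb
    by_contra h
    exact hempty ⟨_, b, hb, h, rfl⟩
  obtain ⟨q₁, h₁, q₂, h₂, z₁, z₂, hne⟩ := M.exists_two_zero j
  have huniq : ∀ b ∈ M.states j, ∀ b' ∈ M.states j, M.Even j b → M.Even j b' → b = b' := by
    intro b hb b' hb' he he'
    by_contra hbb
    have hsub : ({q₁, q₂, b, b'} : Set Q) ⊆ M.states j := by
      rintro x (rfl | rfl | rfl | rfl) <;> assumption
    have hfour : ({q₁, q₂, b, b'} : Set Q).ncard = 4 := by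
      have e₁ : q₁ ≠ b := fun h => z₁.not_even (h ▸ he)
      have e₂ : q₁ ≠ b' := fun h => z₁.not_even (h ▸ he')
      have e₃ : q₂ ≠ b := fun h => z₂.not_even (h ▸ he)
      have e₄ : q₂ ≠ b' := fun h => z₂.not_even (h ▸ he')
      rw [Set.ncard_insert_of_notMem (by simp [*]), Set.ncard_insert_of_notMem (by simp [*]),
        Set.ncard_pair hbb]
    have := Set.ncard_le_ncard hsub (Set.toFinite _)
    omega
  refine M.adversary (j := j) fun b hb t => ?_
  have hbs := (M.core_s hb).2
  rcases M.even_or_zero j b with he | ⟨u, hz⟩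
  · rcases M.even_or_zero j (M.δ b (.s j)) with hes | ⟨u, hz⟩
    · have heq := huniq _ hb.1 _ hbs.1 he hes
      obtain ⟨u, hu⟩ := (hshared b hb).exists_avail hb
      rcases Bool.eq_or_eq_not u t with rfl | rfl
      · exact .inl hu
      · exact .inr (heq ▸ hu)
    · exact .inr ((hshared _ hbs).avail_of_zero hbs hz _)
  · exact .inl ((hshared _ hb).avail_of_zero hb hz _)

/-- With only two states, both are in the core and unshared, and have different drops. -/
theorem two_le_ncard_drops {j : J} (hcard : (M.states j).ncard = 2) :
    2 ≤ (M.drops j).ncard := by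
  obtain ⟨q₁, h₁, q₂, h₂, z₁, z₂, hne⟩ := M.exists_two_zero j
  have hstates : M.states j = {q₁, q₂} := by
    symm
    refine Set.eq_of_subset_of_ncard_le ?_ ?_ (Set.toFinite _)
    · rintro x (rfl | rfl) <;> assumption
    · rw [hcard, Set.ncard_pair hne]
  have hcases : ∀ q, M.Typ (some j) q → q = q₁ ∨ q = q₂ := by
    intro q hq
    have : q ∈ M.states j := hq
    simpa [hstates] using this
  have hswap₁ : M.δ q₁ (.s j) = q₂ := by
    refine (hcases _ (M.typ_s h₁)).resolve_left fun h => ?_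
    have := (M.rk_s_le h₁ true).trans z₁.1.le
    rw [h] at this
    exact z₁.2 (le_antisymm this (M.minRk_le h₁ _))
  have hswap₂ : M.δ q₂ (.s j) = q₁ := by
    refine (hcases _ (M.typ_s h₂)).resolve_right fun h => ?_
    have := (M.rk_s_le h₂ false).trans z₂.1.le
    rw [h] at this
    exact z₂.2 (le_antisymm this (M.minRk_le h₂ _))
  have hcore : q₁ ∈ M.core j ∧ q₂ ∈ M.core j := by
    obtain ⟨b, hb⟩ := M.core_nonempty j
    rcases hcases b hb.1 with rfl | rfl
    · exact ⟨hb, hswap₁ ▸ (M.core_s hb).2⟩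
    · exact ⟨hswap₂ ▸ (M.core_s hb).2, hb⟩
  have hs₁ : ¬ M.Shared j q₁ := by
    intro hs
    refine M.adversary (j := j) fun b hb t => ?_
    rcases hcases b hb.1 with rfl | rfl
    · exact .inl (hs.avail_of_zero hcore.1 z₁ t)
    · exact .inr (hswap₂ ▸ hs.avail_of_zero hcore.1 z₁ _)
  have hs₂ : ¬ M.Shared j q₂ := by
    intro hs
    refine M.adversary (j := j) fun b hb t => ?_
    rcases hcases b hb.1 with rfl | rfl
    · exact .inr (hswap₁ ▸ hs.avail_of_zero hcore.2 z₂ _)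
    · exact .inl (hs.avail_of_zero hcore.2 z₂ t)
  exact (Set.one_lt_ncard (Set.toFinite _)).2 ⟨_, ⟨q₁, hcore.1, hs₁, rfl⟩, _, ⟨q₂, hcore.2, hs₂, rfl⟩,
    M.drop_injective_of_zero hcore.1 hcore.2 z₁ z₂⟩

theorem four_le_ncard (j : J) : 4 ≤ (M.states j ∪ M.drops j).ncard := by
  rw [Set.ncard_union_eq (M.disjoint_states_drops j j) (Set.toFinite _) (Set.toFinite _)]
  have h := M.two_le_ncard_states j
  rcases lt_trichotomy (M.states j).ncard 3 with h' | h' | h'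
  · have := M.two_le_ncard_drops (j := j) (by omega)
    omega
  · have := (Set.ncard_pos (Set.toFinite _)).2 (M.drops_nonempty (j := j) h'.le)
    omega
  · omega

theorem four_mul_card_le (M : D.Model Q) : 4 * Nat.card J ≤ Nat.card Q := by
  classical
  have := Fintype.ofFinite J
  have := Fintype.ofFinite Q
  have hdisj : Set.PairwiseDisjoint ((Finset.univ : Finset J) : Set J)
      fun j => (M.states j ∪ M.drops j).toFinset := by
    intro j _ j' _ hne
    simp only [Function.onFun, Set.disjoint_toFinset, Set.disjoint_union_left,
      Set.disjoint_union_right]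
    exact ⟨⟨M.disjoint_states hne, (M.disjoint_states_drops j' j).symm⟩,
      M.disjoint_states_drops j j', M.disjoint_drops hne⟩
  have hle := Finset.card_le_univ
    ((Finset.univ : Finset J).biUnion fun j => (M.states j ∪ M.drops j).toFinset)
  rw [Finset.card_biUnion hdisj] at hle
  have hsum : ∑ _j : J, 4 ≤ ∑ j : J, (M.states j ∪ M.drops j).toFinset.card := by
    refine Finset.sum_le_sum fun j _ => ?_
    rw [← Set.ncard_eq_toFinset_card']
    exact M.four_le_ncard j
  simp only [Finset.sum_const, Finset.card_univ, smul_eq_mul] at hsum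
  rw [Nat.card_eq_fintype_card, Nat.card_eq_fintype_card]
  omega

end LowerBound

end Model

theorem immortal_tail {w : ℕ → Letter J V} (h : D.Immortal w) :
    D.Immortal fun n => w (n + 1) := by
  obtain ⟨i, f, hf⟩ := h
  refine ⟨i, fun n => f (n + 1), fun n => ?_⟩
  simpa [add_assoc] using hf (n + 1)

theorem immortal_of_tail {w : ℕ → Letter J V} (h : D.Immortal fun n => w (n + 1)) :
    D.Immortal w := by
  obtain ⟨i, f, hf⟩ := h
  refine ⟨i + 1, f, fun n => ?_⟩
  simpa [add_right_comm] using hf n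

theorem bad_iff_tail (C : Option J) (w : ℕ → Letter J V) :
    D.Bad C w ↔ src (w 0) = C ∧ D.Bad (tgt (w 0)) fun n => w (n + 1) := by
  constructor
  · rintro ⟨h₁, h₂, h₃⟩
    exact ⟨h₁, h₂ 0, fun n => h₂ (n + 1), D.immortal_tail h₃⟩
  · rintro ⟨h₁, h₂, h₃, h₄⟩
    refine ⟨h₁, fun n => ?_, D.immortal_of_tail h₄⟩
    cases n with
    | zero => exact h₂
    | succ n => exact h₃ n

/-- The word `a` followed by `w`. -/
def consWord {σ : Type} (a : σ) (w : ℕ → σ) : ℕ → σ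
  | 0 => a
  | n + 1 => w n

theorem bad_consWord (C : Option J) (a : Letter J V) (w : ℕ → Letter J V) :
    D.Bad C (consWord a w) ↔ src a = C ∧ D.Bad (tgt a) w :=
  D.bad_iff_tail C (consWord a w)

theorem exists_bad (j₀ : J) (C : Option J) : ∃ w, D.Bad C w := by
  have hsome : ∀ j, D.Bad (some j) fun _ => .s j := fun j =>
    ⟨rfl, fun _ => rfl, 0, fun n => .p j (n.bodd), fun n => by simp [step]⟩
  cases C with
  | some j => exact ⟨_, hsome j⟩
  | none => exact ⟨consWord (.sep (D.en j₀ true) j₀) _, (D.bad_consWord _ _ _).2 ⟨rfl, hsome j₀⟩⟩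

theorem exists_src_ne (j₀ : J) (C : Option J) : ∃ a : Letter J V, src a ≠ C := by
  cases C with
  | some j => exact ⟨.k j₀ true, by simp [src]⟩
  | none => exact ⟨.s j₀, by simp [src]⟩

section ModelOfDeterministic

variable {Q : Type} (B : BuchiAutomaton (Letter J V) Q)

/-- State `q` recognises the complement of `Bad C`. -/
def HasType (C : Option J) (q : Q) : Prop := ∀ w, w ∈ B.LangFrom q ↔ ¬ D.Bad C w

open Classical in
/-- A transition function of `B`, with junk values where `B` has no transition. -/
noncomputable def nextState (q : Q) (a : Letter J V) : Q :=
  if h : ∃ q', (q, a, q') ∈ B.trans then h.choose else q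

variable {D B}

theorem HasType.trans (j₀ : J) {C : Option J} {q : Q} (h : D.HasType B C q) (a : Letter J V) :
    (q, a, nextState B q a) ∈ B.trans := by
  obtain ⟨a', ha'⟩ := exists_src_ne (V := V) j₀ (tgt a)
  obtain ⟨ρ, ⟨h₀, hρ⟩, -⟩ := (h (consWord a fun _ => a')).2
    (fun hb => ha' ((D.bad_consWord _ _ _).1 hb).2.1)
  have hex : ∃ q', (q, a, q') ∈ B.trans := ⟨ρ 1, h₀ ▸ hρ 0⟩
  rw [nextState, dif_pos hex]
  exact hex.choose_spec

theorem mem_langFrom_consWord (hB : B.Deterministic) {q q' : Q} {a : Letter J V}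
    (h : (q, a, q') ∈ B.trans) (w : ℕ → Letter J V) :
    consWord a w ∈ B.LangFrom q ↔ w ∈ B.LangFrom q' := by
  constructor
  · rintro ⟨ρ, ⟨h₀, hρ⟩, hacc⟩
    refine ⟨fun n => ρ (n + 1), ⟨hB _ _ _ _ (h₀ ▸ hρ 0) h, fun n => hρ (n + 1)⟩, fun N => ?_⟩
    obtain ⟨i, hi, hs⟩ := hacc (N + 1)
    obtain ⟨i, rfl⟩ : ∃ i', i = i' + 1 := ⟨i - 1, by omega⟩
    exact ⟨i, by omega, hs⟩
  · rintro ⟨ρ, ⟨h₀, hρ⟩, hacc⟩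
    refine ⟨consWord q ρ, ⟨rfl, fun n => ?_⟩, fun N => ?_⟩
    · cases n with
      | zero =>
        change (q, a, ρ 0) ∈ B.trans
        rwa [h₀]
      | succ n => exact hρ n
    · obtain ⟨i, hi, hs⟩ := hacc N
      exact ⟨i + 1, by omega, hs⟩

theorem HasType.next (hB : B.Deterministic) (j₀ : J) {q : Q} {a : Letter J V}
    (h : D.HasType B (src a) q) : D.HasType B (tgt a) (nextState B q a) := by
  intro w
  rw [← mem_langFrom_consWord hB (h.trans j₀ a), h, bad_consWord]
  simp

theorem HasType.unique (j₀ : J) {C C' : Option J} {q : Q} (h : D.HasType B C q)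
    (h' : D.HasType B C' q) : C = C' := by
  obtain ⟨w, hw⟩ := D.exists_bad j₀ C
  have hw' : D.Bad C' w := by
    by_contra hn
    exact (h w).1 ((h' w).2 hn) hw
  exact hw.1.symm.trans hw'.1

theorem HasType.acc_iff (hB : B.Deterministic) (j₀ : J) {q : ℕ → Q} {w : ℕ → Letter J V}
    (h : ∀ n, D.HasType B (src (w n)) (q n) ∧ q (n + 1) = nextState B (q n) (w n)) :
    (∀ N, ∃ n, N ≤ n ∧ (q n, w n, nextState B (q n) (w n)) ∈ B.sig) ↔ ¬ D.Immortal w := by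
  have hlegal : ∀ n, src (w (n + 1)) = tgt (w n) := fun n =>
    (h (n + 1)).1.unique j₀ ((h n).2 ▸ (h n).1.next hB j₀)
  have hbad : D.Bad (src (w 0)) w ↔ D.Immortal w :=
    ⟨fun hb => hb.2.2, fun hi => ⟨rfl, hlegal, hi⟩⟩
  have htrans : ∀ n, (q n, w n, q (n + 1)) ∈ B.trans := fun n =>
    (h n).2 ▸ (h n).1.trans j₀ (w n)
  rw [← hbad, ← (h 0).1 w]
  simp only [← (h _).2]
  refine ⟨fun hacc => ⟨q, ⟨rfl, htrans⟩, hacc⟩, ?_⟩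
  rintro ⟨ρ, ⟨h₀, hρ⟩, hacc⟩
  obtain rfl : ρ = q := by
    funext n
    induction n with
    | zero => exact h₀
    | succ n ih => exact hB _ _ _ _ (ih ▸ hρ n) (htrans n)
  exact hacc

/-- The model of a deterministic automaton recognising the complement of `Bad`. -/
noncomputable def modelOfDeterministic (hB : B.Deterministic) (j₀ : J)
    (hL : B.Lang = {w | ¬ D.Bad (some j₀) w}) : D.Model Q where
  δ := nextState B
  acc q a := (q, a, nextState B q a) ∈ B.sig
  Typ := D.HasType B
  typ_next _ _ h := h.next hB j₀
  typ_unique _ _ _ h h' := h.unique j₀ h'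
  exists_typ := ⟨j₀, B.init, fun w => iff_of_eq (congrArg (w ∈ ·) hL)⟩
  acc_iff _ _ h := HasType.acc_iff hB j₀ h

end ModelOfDeterministic

/-- States of the history-deterministic automaton. -/
inductive St (J V L : Type) : Type
  | low : Tok J V → St J V L
  | edge : J → St J V L
  | label : L → St J V L
  | top : St J V L
  deriving Fintype

/-- The state entered after a tracked token has died. -/
def home : Option J → St J V L
  | some j => .edge j
  | none => .top

open Classical in
/-- The successor function of the automaton; the Boolean resolves the only nondeterminism. -/
noncomputable def succ (t : Bool) : St J V L → Letter J V → St J V L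
  | .top, _ => .top
  | .low x, a =>
    if cls x = src a then
      match D.step a x with
      | some y => .low y
      | none => home (tgt a)
    else .top
  | .edge j, .s j' => if j' = j then .edge j else .top
  | .edge j, .tau j' t' => if j' = j then .low (.p j t') else .top
  | .edge j, .c j' => if j' = j then .label (D.lab j t) else .top
  | .edge _, _ => .top
  | .label _, .sep _ j => .edge j
  | .label ℓ, .k j t' =>
    if ℓ = D.lab j t' then .low (.p j true)
    else if ∃ j' u, D.en j' u = D.en j t' ∧ D.lab j' u = ℓ then .low (.p j false)
    else .edge j
  | .label _, _ => .top

/-- The significant steps: the death of the tracked token, or staying in `top`. -/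
def IsSig : St J V L → Letter J V → Prop
  | .top, _ => True
  | .low x, a => cls x = src a ∧ D.step a x = none
  | _, _ => False

/-- The history-deterministic automaton of a design. -/
def automaton (j₀ : J) : BuchiAutomaton (Letter J V) (St J V L) where
  init := .edge j₀
  trans := {e | ∃ t, e.2.2 = D.succ t e.1 e.2.1}
  sig := {e | (∃ t, e.2.2 = D.succ t e.1 e.2.1) ∧ D.IsSig e.1 e.2.1}
  sig_sub := fun _ h => h.1

/-- A state belongs to a class. -/
def InClass : St J V L → Option J → Prop
  | .low x, C => cls x = C
  | .edge j, C => C = some j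
  | .label _, C => C = none
  | .top, _ => False

theorem exists_tgt_eq_some {a : Letter J V} {x : Tok J V} (hx : cls x = src a)
    (h : D.step a x = none) : ∃ j, tgt a = some j := by
  cases a <;> cases x <;> simp_all [cls, src, tgt, step]

theorem inClass_succ {q : St J V L} {a : Letter J V} (t : Bool) (h : InClass q (src a)) :
    InClass (D.succ t q a) (tgt a) := by
  cases q with
  | low x =>
    replace h : cls x = src a := h
    simp only [succ, h, if_true]
    cases hs : D.step a x with
    | some y => exact (D.cls_of_step hs).2
    | none =>
      obtain ⟨j, hj⟩ := D.exists_tgt_eq_some h hs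
      simp [hj, home, InClass]
  | edge j => cases a <;> simp_all [InClass, src, tgt, succ, cls]
  | label ℓ =>
    cases a <;> simp_all [InClass, src, tgt, succ]
    split_ifs <;> simp [cls]
  | top => exact h.elim

theorem succ_eq_top {q : St J V L} {a : Letter J V} {C : Option J} (t : Bool) (h : InClass q C)
    (ha : src a ≠ C) : D.succ t q a = .top := by
  cases q with
  | low x =>
    replace h : cls x = C := h
    simp [succ, h, Ne.symm ha]
  | edge j => cases a <;> simp_all [InClass, src, succ]
  | label ℓ => cases a <;> simp_all [InClass, src, succ]
  | top => rfl

/-- The tokens a state commits to track. -/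
def Covers : St J V L → Tok J V → Prop
  | .low y, x => x = y
  | .edge j, x => cls x = some j
  | .label ℓ, x => ∃ v, x = .r v ∧ D.mem ℓ v
  | .top, _ => False

theorem covers_succ {q : St J V L} {a : Letter J V} {x y : Tok J V} (t : Bool)
    (h : D.Covers q x) (hs : D.step a x = some y) :
    ¬ D.IsSig q a ∧ D.Covers (D.succ t q a) y := by
  cases q with
  | low z =>
    obtain rfl : x = z := h
    simp [IsSig, succ, (D.cls_of_step hs).1, hs, Covers]
  | edge j =>
    refine ⟨id, ?_⟩
    have hc := D.cls_of_step hs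
    obtain ⟨u, rfl⟩ : ∃ u, x = .p j u := by
      cases x <;> simp_all [Covers, cls]
    rw [cls] at hc
    cases a <;> simp only [src, tgt, Option.some.injEq, reduceCtorEq, false_and] at hc
    · obtain ⟨rfl, hy⟩ := hc
      simpa [succ, Covers] using hy
    · obtain ⟨rfl, hy⟩ := hc
      simp only [succ, if_true, Covers]
      simp only [step] at hs
      split_ifs at hs
      exact (Option.some.inj hs).symm
    · obtain ⟨rfl, hy⟩ := hc
      simp only [succ, if_true, Covers]
      simp only [step, if_true, Option.some.injEq] at hs
      exact ⟨_, hs.symm, D.en_mem _ _ _⟩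
  | label ℓ =>
    refine ⟨id, ?_⟩
    obtain ⟨v, rfl, hv⟩ := h
    cases a <;> simp only [step, reduceCtorEq, Option.some.injEq] at hs
    · subst hs
      rfl
    · rename_i j t'
      split_ifs at hs with hne
      simp only [Option.some.injEq] at hs
      subst hs
      simp only [succ]
      split_ifs with h₁ h₂
      · subst h₁
        simp [Covers, hv]
      · obtain ⟨j', u, hen, rfl⟩ := h₂
        have : ¬ D.mem (D.lab j t') v := by
          intro hm
          refine hne (D.mem_star j t' j' u v hen.symm ?_ hm hv)
          rintro ⟨⟩
          exact h₁ rfl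
        simp [Covers, this]
      · simp [Covers, cls]
  | top => exact h.elim

theorem covers_of_isSig {q : St J V L} {a : Letter J V} {y : Tok J V} (t : Bool)
    (hq : InClass q (src a)) (h : D.IsSig q a) (hy : cls y = tgt a) :
    D.Covers (D.succ t q a) y := by
  cases q with
  | low x =>
    obtain ⟨hx, hs⟩ := h
    obtain ⟨j, hj⟩ := D.exists_tgt_eq_some hx hs
    simp [succ, hx, hs, hj, home, Covers, hy]
  | edge j => exact h.elim
  | label ℓ => exact h.elim
  | top => exact hq.elim

theorem not_bad_of_mem_lang {j₀ : J} {w : ℕ → Letter J V} (h : w ∈ (D.automaton j₀).Lang) :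
    ¬ D.Bad (some j₀) w := by
  rintro ⟨h₀, hlegal, i, f, hf⟩
  obtain ⟨ρ, ⟨hρ₀, hρ⟩, hacc⟩ := h
  have hclass : ∀ n, InClass (ρ n) (src (w n)) := by
    intro n
    induction n with
    | zero => rw [hρ₀, h₀]; rfl
    | succ n ih =>
      obtain ⟨t, ht⟩ := hρ n
      rw [hlegal]
      exact (show ρ (n + 1) = _ from ht) ▸ D.inClass_succ t ih
  obtain ⟨n, hn, ⟨t, ht⟩, hsig⟩ := hacc i
  have hcov : ∀ m, D.Covers (ρ (n + 1 + m)) (f (n - i + 1 + m)) := by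
    intro m
    induction m with
    | zero =>
      have := hf (n - i)
      rw [show i + (n - i) = n by omega] at this
      exact (show ρ (n + 1) = _ from ht) ▸
        D.covers_of_isSig t (hclass n) hsig (D.cls_of_step this).2
    | succ m ih =>
      have := hf (n - i + 1 + m)
      rw [show i + (n - i + 1 + m) = n + 1 + m by omega] at this
      obtain ⟨u, hu⟩ := hρ (n + 1 + m)
      exact (show ρ (n + 1 + m + 1) = _ from hu) ▸ (D.covers_succ u ih this).2
  obtain ⟨n', hn', -, hsig'⟩ := hacc (n + 1)
  obtain ⟨m, rfl⟩ := Nat.exists_eq_add_of_le hn'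
  have := hf (n - i + 1 + m)
  rw [show i + (n - i + 1 + m) = n + 1 + m by omega] at this
  exact (D.covers_succ true (hcov m) this).1 hsig'

/-- The update of the token remembered by the resolver. -/
noncomputable def update (m : Tok J V) (a : Letter J V) : St J V L → Tok J V
  | .low y => y
  | .edge j => (D.step a m).getD (.p j true)
  | _ => (D.step a m).getD m

/-- The nondeterministic choice suggested by the remembered token. -/
def choice : Tok J V → Bool
  | .p _ t => t
  | .r _ => true

/-- The remembered token is consistent with the current state. -/
def Consistent : St J V L → Tok J V → Prop
  | .low x, m => m = x
  | .edge j, m => cls m = some j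
  | .label ℓ, m => ∃ j t, m = .r (D.en j t) ∧ D.lab j t = ℓ
  | .top, _ => True

theorem consistent_edge_update {j : J} {m : Tok J V} {a : Letter J V} (ha : tgt a = some j) :
    D.Consistent (.edge j) (D.update m a (.edge j)) := by
  simp only [Consistent, update]
  cases hs : D.step a m with
  | none => rfl
  | some y => exact ((D.cls_of_step hs).2).trans ha

theorem consistent_succ {q : St J V L} {m : Tok J V} (h : D.Consistent q m) (a : Letter J V) :
    D.Consistent (D.succ (choice m) q a) (D.update m a (D.succ (choice m) q a)) := by
  cases q with
  | low x =>
    simp only [succ]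
    split_ifs with hx
    · cases hs : D.step a x with
      | some y => rfl
      | none =>
        obtain ⟨j, hj⟩ := D.exists_tgt_eq_some hx hs
        simp only [hj, home]
        exact D.consistent_edge_update hj
    · trivial
  | edge j =>
    obtain ⟨u, rfl⟩ : ∃ u, m = .p j u := by
      cases m <;> simp_all [Consistent, cls]
    cases a <;> simp only [succ] <;> (try split_ifs with hj) <;> try trivial
    · subst hj
      exact D.consistent_edge_update rfl
    · subst hj
      exact ⟨_, u, by simp [update, step], rfl⟩
  | label ℓ =>
    cases a <;> simp only [succ] <;> (try split_ifs) <;> first | trivial | rfl | skip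
    all_goals exact D.consistent_edge_update rfl
  | top => trivial

/-- Without a significant step, the remembered token survives or is handed over to a low state,
which then stays low. -/
theorem progress {q : St J V L} {m : Tok J V} {a : Letter J V} (h : D.Consistent q m)
    (hq : InClass q (src a)) (hsig : ¬ D.IsSig q a) :
    ((∃ x, q = .low x) → ∃ y, D.succ (choice m) q a = .low y) ∧
    ((∃ x, q = .low x) ∨ (¬ ∃ y, D.succ (choice m) q a = .low y) →
      D.step a m = some (D.update m a (D.succ (choice m) q a))) := by
  cases q with
  | low x =>
    obtain rfl : m = x := h
    have hc : cls m = src a := hq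
    obtain ⟨y, hy⟩ : ∃ y, D.step a m = some y := by
      rw [← Option.ne_none_iff_exists']
      exact fun hn => hsig ⟨hc, hn⟩
    have hsucc : D.succ (choice m) (.low m) a = .low y := by simp [succ, hc, hy]
    rw [hsucc]
    exact ⟨fun _ => ⟨y, rfl⟩, fun _ => hy⟩
  | edge j =>
    obtain ⟨u, rfl⟩ : ∃ u, m = .p j u := by
      cases m <;> simp_all [Consistent, cls]
    refine ⟨fun ⟨x, hx⟩ => by simp at hx, ?_⟩
    rintro (⟨x, hx⟩ | hlow)
    · simp at hx
    cases a <;> simp_all [InClass, src, succ, update, step]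
  | label ℓ =>
    obtain ⟨j, u, rfl, rfl⟩ := h
    refine ⟨fun ⟨x, hx⟩ => by simp at hx, ?_⟩
    rintro (⟨x, hx⟩ | hlow)
    · simp at hx
    cases a with
    | k j' t' =>
      simp only [succ] at hlow ⊢
      split_ifs at hlow ⊢ with h₁ h₂
      · simp at hlow
      · simp at hlow
      · have : D.en j u ≠ D.en j' t' := fun he => h₂ ⟨j, u, he, rfl⟩
        simp [update, step, this]
    | _ => simp_all [InClass, src, succ, update, step]
  | top => exact hq.elim

/-- The last state of a finite run. -/
def lastState (j₀ : J) (l : List (St J V L × Letter J V × St J V L)) : St J V L :=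
  (l.getLast?.map fun e => e.2.2).getD (.edge j₀)

/-- The token remembered after a finite run. -/
noncomputable def memory (j₀ : J) (l : List (St J V L × Letter J V × St J V L)) : Tok J V :=
  l.foldl (fun m e => D.update m e.2.1 e.2.2) (.p j₀ true)

theorem lastState_of_finRun {j₀ : J} {l : List (St J V L × Letter J V × St J V L)}
    {q : St J V L} (h : (D.automaton j₀).FinRun l q) : lastState j₀ l = q := by
  cases h <;> simp [lastState, automaton]

/-- The resolver that follows the remembered token. -/
noncomputable def resolver (j₀ : J) : (D.automaton j₀).Resolver where
  res l a := (lastState j₀ l, a, D.succ (choice (D.memory j₀ l)) (lastState j₀ l) a)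
  res_valid _ _ _ h := ⟨D.lastState_of_finRun h, rfl, _, rfl⟩

theorem infinitely_many_isSig {j₀ : J} {w : ℕ → Letter J V} (hw : ¬ D.Bad (some j₀) w)
    {q : ℕ → St J V L} {m : ℕ → Tok J V} (hq₀ : q 0 = .edge j₀) (hm₀ : m 0 = .p j₀ true)
    (hq : ∀ n, q (n + 1) = D.succ (choice (m n)) (q n) (w n))
    (hm : ∀ n, m (n + 1) = D.update (m n) (w n) (q (n + 1))) (N : ℕ) :
    ∃ n, N ≤ n ∧ D.IsSig (q n) (w n) := by
  have hcons : ∀ n, D.Consistent (q n) (m n) := by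
    intro n
    induction n with
    | zero => rw [hq₀, hm₀]; rfl
    | succ n ih =>
      rw [hm, hq]
      exact D.consistent_succ ih (w n)
  by_cases htop : ∃ n, q n = .top
  · obtain ⟨n, hn⟩ := htop
    have hstay : ∀ k, q (n + k) = .top := by
      intro k
      induction k with
      | zero => exact hn
      | succ k ih => rw [← add_assoc, hq, ih]; rfl
    refine ⟨n + N, by omega, ?_⟩
    rw [hstay]
    trivial
  have hclass : ∀ n, InClass (q n) (src (w n)) ∧ (∀ k < n, src (w (k + 1)) = tgt (w k)) ∧
      src (w 0) = some j₀ := by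
    intro n
    induction n with
    | zero =>
      have : src (w 0) = some j₀ := by
        by_contra hne
        refine htop ⟨1, ?_⟩
        rw [hq]
        exact D.succ_eq_top _ (C := some j₀) (by rw [hq₀]; rfl) hne
      refine ⟨?_, by simp, this⟩
      rw [this, hq₀]
      rfl
    | succ n ih =>
      obtain ⟨ih₁, ih₂, ih₃⟩ := ih
      have hc : InClass (q (n + 1)) (tgt (w n)) := by
        rw [hq]
        exact D.inClass_succ _ ih₁
      have : src (w (n + 1)) = tgt (w n) := by
        by_contra hne
        refine htop ⟨n + 2, ?_⟩
        rw [hq]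
        exact D.succ_eq_top _ hc hne
      refine ⟨this ▸ hc, fun k hk => ?_, ih₃⟩
      rcases Nat.lt_succ_iff_lt_or_eq.1 hk with hk | rfl
      · exact ih₂ k hk
      · exact this
  have hlegal : ∀ n, src (w (n + 1)) = tgt (w n) := fun n => (hclass (n + 1)).2.1 n (by omega)
  by_contra! hno
  refine hw ⟨(hclass 0).2.2, hlegal, ?_⟩
  have hprog : ∀ n, N ≤ n → _ := fun n hn => D.progress (hcons n) (hclass n).1 (hno n hn)
  simp only [← hq, ← hm] at hprog
  by_cases hlow : ∃ n, N ≤ n ∧ ∃ x, q n = .low x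
  · obtain ⟨n, hn, hx⟩ := hlow
    have hstay : ∀ k, ∃ x, q (n + k) = .low x := by
      intro k
      induction k with
      | zero => exact hx
      | succ k ih => exact (hprog (n + k) (by omega)).1 ih
    exact ⟨n, fun k => m (n + k), fun k => (hprog (n + k) (by omega)).2 (.inl (hstay k))⟩
  · exact ⟨N, fun k => m (N + k), fun k => (hprog (N + k) (by omega)).2
      (.inr fun h => hlow ⟨N + k + 1, by omega, h⟩)⟩

theorem resolver_accepts {j₀ : J} {w : ℕ → Letter J V} (hw : ¬ D.Bad (some j₀) w) :
    (D.resolver j₀).InducedBuchiAcc w := by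
  intro N
  obtain ⟨n, hn, hsig⟩ := D.infinitely_many_isSig hw
    (q := fun n => lastState j₀ ((D.resolver j₀).hist w n))
    (m := fun n => D.memory j₀ ((D.resolver j₀).hist w n)) rfl rfl
    (fun n => by simp [BuchiAutomaton.Resolver.hist, lastState, resolver])
    (fun n => by simp [BuchiAutomaton.Resolver.hist, lastState, resolver, memory]) N
  exact ⟨n, hn, ⟨_, rfl⟩, hsig⟩

theorem lang_automaton (j₀ : J) : (D.automaton j₀).Lang = {w | ¬ D.Bad (some j₀) w} := by
  ext w
  refine ⟨D.not_bad_of_mem_lang, fun hw => ?_⟩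
  have hnext : ∀ n, (D.resolver j₀).res ((D.resolver j₀).hist w n) (w n) =
      (lastState j₀ ((D.resolver j₀).hist w n), w n,
        lastState j₀ ((D.resolver j₀).hist w (n + 1))) := by
    intro n
    simp [BuchiAutomaton.Resolver.hist, lastState, resolver]
  refine ⟨fun n => lastState j₀ ((D.resolver j₀).hist w n), ⟨rfl, fun n => ?_⟩, fun N => ?_⟩
  · rw [← hnext]
    exact ⟨_, rfl⟩
  · obtain ⟨n, hn, hs⟩ := D.resolver_accepts hw N
    exact ⟨n, hn, hnext n ▸ hs⟩

theorem historyDeterministic_automaton (j₀ : J) : (D.automaton j₀).HistoryDeterministic :=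
  ⟨D.resolver j₀, fun _ hw => D.resolver_accepts (D.not_bad_of_mem_lang hw)⟩

theorem card_st_le [Fintype J] [Fintype V] [Fintype L] :
    Fintype.card (St J V L) ≤
      3 * Fintype.card J + Fintype.card V + Fintype.card L + 1 := by
  let f : St J V L → ((J × Bool) ⊕ V) ⊕ (J ⊕ (L ⊕ Unit))
    | .low (.p j t) => .inl (.inl (j, t))
    | .low (.r v) => .inl (.inr v)
    | .edge j => .inr (.inl j)
    | .label ℓ => .inr (.inr (.inl ℓ))
    | .top => .inr (.inr (.inr ()))
  have hf : Function.Injective f := by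
    rintro ((_ | _) | _ | _ | _) ((_ | _) | _ | _ | _) h <;> simp_all [f]
  have := Fintype.card_le_of_injective f hf
  simp only [Fintype.card_sum, Fintype.card_prod, Fintype.card_bool, Fintype.card_unit] at this
  omega

/-- A design with many edges yields a succinct history-deterministic automaton. -/
theorem card_lt_of_deterministic [Fintype J] [Fintype V] [Fintype L] (j₀ : J)
    (hcard : Fintype.card V + Fintype.card L + 1 < Fintype.card J) {Q : Type} [Fintype Q]
    (B : BuchiAutomaton (Letter J V) Q) (hB : B.Deterministic)
    (hL : B.Lang = (D.automaton j₀).Lang) :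
    Fintype.card (St J V L) < Fintype.card Q := by
  have h := (modelOfDeterministic hB j₀ (hL.trans (D.lang_automaton j₀))).four_mul_card_le
  rw [Nat.card_eq_fintype_card, Nat.card_eq_fintype_card] at h
  have := card_st_le (J := J) (V := V) (L := L)
  omega

end EdgeDesign

namespace CirculantDesign

/-- Displacement along the dart of kind `(i, t)`. -/
def gen (d : Fin 3 × Bool) : ZMod 150 :=
  match d with
  | (i, true) => ![46, 140, 52] i
  | (i, false) => -![46, 140, 52] i

/-- Position of the source of the dart of kind `(i, t)` within the block of its label. -/
def off (d : Fin 3 × Bool) : ZMod 150 :=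
  match d with
  | (i, true) => ![0, 90, 79] i
  | (i, false) => ![31, 103, 17] i

/-- The elements of the base block. -/
def blk (k : (Fin 3 × Bool) × Bool) : ZMod 150 :=
  match k with
  | (d, true) => off d
  | (d, false) => off d + gen d

/-- The endpoints of edges. -/
def endpoint (j : ZMod 150 × Fin 3) (t : Bool) : ZMod 150 :=
  if t then j.1 else j.1 + gen (j.2, true)

theorem gen_ne_zero : ∀ d, gen d ≠ 0 := by decide

theorem gen_injective : ∀ d d', gen d = gen d' → d = d' := by decide

theorem blk_both : ∀ i k k', blk k - off (i, true) = blk k' - off (i, false) + gen (i, true) →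
    blk k - off (i, true) = 0 ∨ blk k - off (i, true) = gen (i, true) := by decide

theorem blk_star : ∀ d d' k k', d ≠ d' → blk k - off d = blk k' - off d' →
    blk k - off d = 0 := by decide

theorem blk_opposite : ∀ (d d' : Fin 3 × Bool) k, d ≠ d' →
    gen d' - gen d + off (d.1, !d.2) ≠ blk k := by decide

theorem endpoint_not (j : ZMod 150 × Fin 3) (t : Bool) :
    endpoint j (!t) = endpoint j t + gen (j.2, t) := by
  cases t <;> simp [endpoint, gen]

theorem kind_ne {j j' : ZMod 150 × Fin 3} {t t' : Bool} (h : endpoint j t = endpoint j' t')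
    (hne : (j, t) ≠ (j', t')) : (j.2, t) ≠ (j'.2, t') := by
  intro hk
  obtain ⟨x, i⟩ := j
  obtain ⟨x', i'⟩ := j'
  simp only [Prod.mk.injEq] at hk
  obtain ⟨rfl, rfl⟩ := hk
  refine hne ?_
  cases t <;> simp_all [endpoint]

/-- A design on a circulant graph with 150 vertices, 150 labels and 450 edges. -/
def design : EdgeDesign (ZMod 150 × Fin 3) (ZMod 150) (ZMod 150) where
  en := endpoint
  lab j t := endpoint j t - off (j.2, t)
  mem z v := ∃ k, v - z = blk k
  en_mem j t t' := by
    rcases Bool.eq_or_eq_not t t' with rfl | rfl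
    · exact ⟨((j.2, t), true), by simp [blk]⟩
    · exact ⟨((j.2, t'), false), by rw [endpoint_not]; simp only [blk]; ring⟩
  en_ne j t h := by
    rw [endpoint_not, left_eq_add] at h
    exact gen_ne_zero _ h
  mem_both := by
    rintro ⟨x, i⟩ v ⟨k, hk⟩ ⟨k', hk'⟩
    simp only [endpoint, if_true] at *
    have h₁ : v - x = blk k - off (i, true) := by rw [← hk]; ring
    have h₂ : v - x = blk k' - off (i, false) + gen (i, true) := by
      rw [← hk']
      simp only [Bool.false_eq_true, if_false]
      ring
    rcases blk_both i k k' (h₁.symm.trans h₂) with h | h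
    · exact .inl (sub_eq_zero.1 (h₁.trans h))
    · exact .inr (by simpa [add_comm] using sub_eq_iff_eq_add.1 (h₁.trans h))
  mem_star := by
    rintro j t j' t' v hen hne ⟨k, hk⟩ ⟨k', hk'⟩
    have h₁ : v - endpoint j t = blk k - off (j.2, t) := by rw [← hk]; ring
    have h₂ : v - endpoint j t = blk k' - off (j'.2, t') := by rw [← hk', hen]; ring
    exact sub_eq_zero.1 (h₁.trans (blk_star _ _ k k' (kind_ne hen hne) (h₁.symm.trans h₂)))
  not_mem_opposite := by
    rintro j t j' t' hen hne ⟨k, hk⟩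
    refine blk_opposite (j.2, t) (j'.2, t') k
      (kind_ne hen fun h => hne (congrArg Prod.fst h)) ?_
    rw [← hk, endpoint_not, endpoint_not, hen]
    ring
  simple := by
    rintro ⟨x, i⟩ ⟨x', i'⟩ h
    have h₁ := h true
    have h₂ := h false
    simp only [endpoint, if_true, Bool.false_eq_true, if_false] at h₁ h₂
    rcases h₁ with rfl | rfl
    · rcases h₂ with h₂ | h₂
      · exact absurd (by simpa using h₂) (gen_ne_zero (i', true))
      · have := gen_injective _ _ (add_left_cancel h₂)
        simp_all
    · rcases h₂ with h₂ | h₂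
      · have h₃ : gen (i', true) = gen (i, false) := by
          have : gen (i, false) = -gen (i, true) := rfl
          rw [this]
          linear_combination h₂
        have := gen_injective _ _ h₃
        simp_all
      · exact absurd (by simpa using h₂) (gen_ne_zero (i', true))

end CirculantDesign

/-- There is a finite alphabet `σ` and a history-deterministic
Büchi automaton `A` over `σ` such that every deterministic Büchi automaton
recognising the same language has strictly more states than `A`. -/
theorem exists_succinct_hd_buchi :
    ∃ (σ : Type) (_ : Fintype σ) (Q : Type) (iQ : Fintype Q) (A : BuchiAutomaton σ Q),
      A.HistoryDeterministic ∧
      ∀ (Q' : Type) (iQ' : Fintype Q') (B : BuchiAutomaton σ Q'),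
        B.Deterministic → B.Lang = A.Lang →
        @Fintype.card Q iQ < @Fintype.card Q' iQ' :=
  ⟨EdgeDesign.Letter (ZMod 150 × Fin 3) (ZMod 150), inferInstance,
    EdgeDesign.St (ZMod 150 × Fin 3) (ZMod 150) (ZMod 150), inferInstance,
    CirculantDesign.design.automaton (0, 0),
    CirculantDesign.design.historyDeterministic_automaton (0, 0),
    fun _ _ B hB hL => CirculantDesign.design.card_lt_of_deterministic (0, 0)
      (by simp [ZMod.card]) B hB hL⟩
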